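/- arXiv:2106.02265 — 3 statements merged into one kernel-verified Lean document; each statement's English description precedes it below -/
import Mathlib

section
/- Let F be a finite field of characteristic 2 with |F| = 2^k, and let G = C_3 × D_10 with presentation ⟨x, y, z | x² = y⁵ = z³ = 1, xy = y⁴x, xz = zx, yz = zy⟩. Then the Jacobson radical of the group algebra FG equals the F-span of the three elements (1+x)(1+y+y²+y³+y⁴)zⁱ for i = 0, 1, 2; in particular dim_F J(FG) = 3. -/
/-!
Elements of the radical of `F[G]` are nilpotent, so they have trace zero in every permutation
representation. Let `|A|` and `n` be odd and let `A × Dₙ` act on `A × ℤ/n`, by left translation on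
`A` and by symmetries of the `n`-gon on `ℤ/n`. Modulo 2, the number of fixed points is 1 at the
identity and at the reflections `(1, s)`, and 0 elsewhere. Applied to all translates of a radical
element `w`, the vanishing of the trace gives `w (c, d) = ∑ w (c, s d)` over the reflections `s`.
For a rotation `d` the elements `s d` run over all reflections, so `w (c, d)` does not depend on the
rotation; for a reflection `d` they run over all `n` rotations, and `n` is odd, so `w (c, d)` has
the same value. Hence `w` is constant on the cosets of `Dₙ`. Conversely, the sum `e` of such a coset
satisfies `e * y * e = 0` for all `y`, because `|Dₙ|` vanishes in `F`.
-/

open MulAction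

section Ring

variable {R : Type*} [Ring R]

theorem isNilpotent_of_mem_jacobson_bot [IsArtinianRing R] {w : R}
    (hw : w ∈ Ideal.jacobson (⊥ : Ideal R)) : IsNilpotent w := by
  obtain ⟨n, hn⟩ := IsArtinianRing.isNilpotent_jacobson_bot (R := R)
  exact ⟨n, by simpa [hn] using Ideal.pow_mem_pow hw n⟩

theorem mem_jacobson_bot_of_forall_mul_mul_self_eq_zero {e : R} (he : ∀ y, e * y * e = 0) :
    e ∈ Ideal.jacobson (⊥ : Ideal R) := by
  rw [Ideal.mem_jacobson_iff]
  intro y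
  refine ⟨1 - y * e, ?_⟩
  have expand : (1 - y * e) * y * e + (1 - y * e) - 1 = -(y * (e * y * e)) := by noncomm_ring
  rw [expand, he, mul_zero, neg_zero]
  exact zero_mem _

end Ring

section PermutationCharacter

variable {k G X : Type*}

section Monoid

variable [Monoid G] [MulAction G X] [Finite X]

theorem trace_ofMulAction [CommRing k] (g : G) :
    LinearMap.trace k _ (Representation.ofMulAction k G X g) = Nat.card (fixedBy X g) := by
  classical
  have := Fintype.ofFinite X
  rw [LinearMap.trace_eq_matrix_trace k (MonoidAlgebra.basis X k), Nat.card_eq_fintype_card,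
    Fintype.card_subtype]
  simp [Matrix.trace, LinearMap.toMatrix_apply, MonoidAlgebra.basis, Finsupp.single_apply]

theorem trace_asAlgebraHom_ofMulAction [CommRing k] [Fintype G] (w : MonoidAlgebra k G) :
    LinearMap.trace k _ ((Representation.ofMulAction k G X).asAlgebraHom w) =
      ∑ g, w.coeff g * Nat.card (fixedBy X g) := by
  classical
  induction w using MonoidAlgebra.induction_linear with
  | zero => simp
  | add u v hu hv => simp [hu, hv, add_mul, Finset.sum_add_distrib]
  | single g c => simp [trace_ofMulAction, Finsupp.single_apply]

theorem sum_coeff_mul_card_fixedBy_of_mem_jacobson_bot [Field k] [Fintype G] {w : MonoidAlgebra k G}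
    (hw : w ∈ Ideal.jacobson (⊥ : Ideal (MonoidAlgebra k G))) :
    ∑ g, w.coeff g * Nat.card (fixedBy X g) = 0 := by
  have : IsArtinianRing (MonoidAlgebra k G) := IsArtinianRing.of_finite k _
  rw [← trace_asAlgebraHom_ofMulAction]
  exact (LinearMap.isNilpotent_trace_of_isNilpotent
    ((isNilpotent_of_mem_jacobson_bot hw).map _)).eq_zero

end Monoid

theorem sum_coeff_mul_right_mul_card_fixedBy_of_mem_jacobson_bot [Field k] [Group G] [Fintype G]
    [MulAction G X] [Finite X] {w : MonoidAlgebra k G}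
    (hw : w ∈ Ideal.jacobson (⊥ : Ideal (MonoidAlgebra k G))) (h : G) :
    ∑ g, w.coeff (g * h) * Nat.card (fixedBy X g) = 0 := by
  have translate_mem := Ideal.mul_mem_right (MonoidAlgebra.single h⁻¹ (1 : k)) _ hw
  simpa using sum_coeff_mul_card_fixedBy_of_mem_jacobson_bot (X := X) translate_mem

end PermutationCharacter

section ProductAction

variable {G H X Y : Type*}

section Monoid

variable [Monoid G] [Monoid H] [MulAction G X] [MulAction H Y]

/-- The action of `G × H` on `X × Y` in which each factor acts on its own coordinate. It is not a
global instance because Mathlib's `Prod` instances are the diagonal actions. -/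
abbrev componentwiseMulAction : MulAction (G × H) (X × Y) where
  smul g p := (g.1 • p.1, g.2 • p.2)
  one_smul p := Prod.ext (one_smul G p.1) (one_smul H p.2)
  mul_smul g h p := Prod.ext (mul_smul g.1 h.1 p.1) (mul_smul g.2 h.2 p.2)

attribute [local instance] componentwiseMulAction in
theorem card_fixedBy_prod (g : G × H) :
    Nat.card (fixedBy (X × Y) g) = Nat.card (fixedBy X g.1) * Nat.card (fixedBy Y g.2) := by
  have fixedBy_eq : fixedBy (X × Y) g = fixedBy X g.1 ×ˢ fixedBy Y g.2 :=
    Set.ext fun _ => Prod.ext_iff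
  rw [fixedBy_eq, ← Nat.card_prod]
  exact Nat.card_congr (Equiv.Set.prod _ _)

end Monoid

theorem card_fixedBy_self [Group G] [DecidableEq G] (g : G) :
    Nat.card (fixedBy G g) = if g = 1 then Nat.card G else 0 := by
  split_ifs with hg <;> simp [hg, fixedBy]

attribute [local instance] componentwiseMulAction in
theorem sum_coeff_snd_mul_card_fixedBy_of_mem_jacobson_bot {k : Type*} [Field k] [Group G]
    [Finite G] [Group H] [Fintype H] [MulAction H Y] [Finite Y] (hG : (Nat.card G : k) ≠ 0)
    {w : MonoidAlgebra k (G × H)}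
    (hw : w ∈ Ideal.jacobson (⊥ : Ideal (MonoidAlgebra k (G × H)))) (c : G) (d : H) :
    ∑ h, w.coeff (c, h * d) * Nat.card (fixedBy Y h) = 0 := by
  classical
  have := Fintype.ofFinite G
  have trace_eq : Nat.card G * ∑ h, w.coeff (c, h * d) * Nat.card (fixedBy Y h) = 0 := by
    rw [← sum_coeff_mul_right_mul_card_fixedBy_of_mem_jacobson_bot (X := G × Y) hw (c, d),
      Fintype.sum_prod_type, Finset.sum_comm, Finset.mul_sum]
    refine Finset.sum_congr rfl fun h _ => ?_
    simp only [card_fixedBy_prod, card_fixedBy_self, Prod.mk_mul_mk, Nat.cast_mul, Nat.cast_ite,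
      Nat.cast_zero, ite_mul, zero_mul, mul_ite, mul_zero, Finset.sum_ite_eq', Finset.mem_univ,
      if_true, one_mul, mul_left_comm]
  exact (mul_eq_zero.mp trace_eq).resolve_left hG

end ProductAction

section Dihedral

open DihedralGroup

variable {n : ℕ}

theorem sum_dihedralGroup [NeZero n] {M : Type*} [AddCommMonoid M] (f : DihedralGroup n → M) :
    ∑ d, f d = ∑ i, f (r i) + ∑ i, f (sr i) := by
  rw [← equivSum.symm.sum_comp, Fintype.sum_sum_type]
  rfl

theorem sum_fin_natCast_zmod [NeZero n] {M : Type*} [AddCommMonoid M] (f : ZMod n → M) :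
    ∑ j : Fin n, f (j : ℕ) = ∑ i, f i := by
  cases n with
  | zero => exact (NeZero.ne 0 rfl).elim
  | succ m => exact Fintype.sum_congr _ _ fun j => congrArg f (Fin.cast_val_eq_self j)

/-- The action of `DihedralGroup n` on the vertices of the regular `n`-gon, labelled by `ZMod n`.
The reflection is applied after the rotation, as in `sr i = sr 0 * r i`. -/
abbrev vertexMulAction : MulAction (DihedralGroup n) (ZMod n) where
  smul
    | r i, v => v + i
    | sr i, v => -(v + i)
  one_smul v := add_zero v
  mul_smul
    | r i, r j, v => show v + (i + j) = v + j + i by ring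
    | r i, sr j, v => show -(v + (j - i)) = -(v + j) + i by ring
    | sr i, r j, v => show -(v + (i + j)) = -(v + j + i) by ring
    | sr i, sr j, v => show v + (j - i) = -(-(v + j) + i) by ring

attribute [local instance] vertexMulAction

theorem card_fixedBy_dihedral_r (i : ZMod n) :
    Nat.card (fixedBy (ZMod n) (r i)) = if i = 0 then n else 0 := by
  have fixed_iff (v : ZMod n) : v ∈ fixedBy (ZMod n) (r i) ↔ i = 0 :=
    show v + i = v ↔ i = 0 from add_eq_left
  split_ifs with hi
  · rw [Set.eq_univ_of_forall fun v => (fixed_iff v).mpr hi]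
    simp
  · rw [Set.eq_empty_of_forall_notMem fun v => mt (fixed_iff v).mp hi]
    simp

theorem card_fixedBy_dihedral_sr (hn : Odd n) (i : ZMod n) :
    Nat.card (fixedBy (ZMod n) (sr i)) = 1 := by
  have two_isUnit : IsUnit ((2 : ℕ) : ZMod n) :=
    (ZMod.isUnit_iff_coprime 2 n).mpr (Nat.coprime_two_left.mpr hn)
  obtain ⟨v, hv⟩ : ∃ v : ZMod n, ((2 : ℕ) : ZMod n) * v = -i :=
    (IsUnit.isUnit_iff_mulLeft_bijective.mp two_isUnit).surjective _
  have fixedBy_eq : fixedBy (ZMod n) (sr i) = {v} := by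
    ext u
    change -(u + i) = u ↔ u = v
    rw [← two_isUnit.mul_right_inj (b := u), hv]
    push_cast
    constructor <;> intro h <;> linear_combination -h
  rw [fixedBy_eq, Nat.card_unique]

section Radical

variable {F A : Type*} [Field F] [CharP F 2] [Group A] [Finite A]
  {w : MonoidAlgebra F (A × DihedralGroup n)}

theorem coeff_eq_sum_coeff_sr_mul_of_mem_jacobson_bot [NeZero n] (hA : Odd (Nat.card A))
    (hn : Odd n) (hw : w ∈ Ideal.jacobson (⊥ : Ideal (MonoidAlgebra F (A × DihedralGroup n))))
    (c : A) (d : DihedralGroup n) :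
    w.coeff (c, d) = ∑ i, w.coeff (c, sr i * d) := by
  have card_A : (Nat.card A : F) = 1 :=
    natCast_eq_one_of_odd_of_two_eq_zero hA CharTwo.two_eq_zero
  have cast_n : (n : F) = 1 := natCast_eq_one_of_odd_of_two_eq_zero hn CharTwo.two_eq_zero
  have trace_eq := sum_coeff_snd_mul_card_fixedBy_of_mem_jacobson_bot (Y := ZMod n)
    (card_A.trans_ne one_ne_zero) hw c d
  rw [sum_dihedralGroup] at trace_eq
  simp only [card_fixedBy_dihedral_r, card_fixedBy_dihedral_sr hn] at trace_eq
  rw [← CharTwo.add_eq_zero]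
  simpa [cast_n] using trace_eq

theorem coeff_eq_coeff_one_of_mem_jacobson_bot (hA : Odd (Nat.card A)) (hn : Odd n)
    (hw : w ∈ Ideal.jacobson (⊥ : Ideal (MonoidAlgebra F (A × DihedralGroup n))))
    (c : A) (d : DihedralGroup n) :
    w.coeff (c, d) = w.coeff (c, 1) := by
  have : NeZero n := ⟨hn.pos.ne'⟩
  have coeff_r (j : ZMod n) : w.coeff (c, r j) = w.coeff (c, 1) := by
    rw [coeff_eq_sum_coeff_sr_mul_of_mem_jacobson_bot hA hn hw c (r j),
      coeff_eq_sum_coeff_sr_mul_of_mem_jacobson_bot hA hn hw c 1]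
    simpa using Equiv.sum_comp (Equiv.addRight j) fun i => w.coeff (c, sr i)
  rcases d with j | j
  · exact coeff_r j
  · rw [coeff_eq_sum_coeff_sr_mul_of_mem_jacobson_bot hA hn hw]
    simp [coeff_r, natCast_eq_one_of_odd_of_two_eq_zero hn CharTwo.two_eq_zero]

end Radical

end Dihedral

section FiberSum

variable {F A H : Type*} [Fintype H]

variable (F H) in
/-- The sum, in the group algebra, of all elements of the coset `{c} × H` of `H` in `A × H`. -/
noncomputable def fiberSum [Semiring F] (c : A) : MonoidAlgebra F (A × H) :=
  ∑ d : H, MonoidAlgebra.single (c, d) 1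

section Semiring

variable [Semiring F]

theorem coeff_fiberSum [DecidableEq A] (c c' : A) (d : H) :
    (fiberSum F H c).coeff (c', d) = if c = c' then 1 else 0 := by
  classical
  simp only [fiberSum, MonoidAlgebra.coeff_sum, Finsupp.finsetSum_apply,
    MonoidAlgebra.coeff_single, Finsupp.single_apply, Prod.mk.injEq]
  split_ifs with hc <;> simp [hc]

theorem coeff_sum_smul_fiberSum [Fintype A] (f : A → F) (c : A) (d : H) :
    (∑ a, f a • fiberSum F H a).coeff (c, d) = f c := by
  classical
  simp [MonoidAlgebra.coeff_sum, Finsupp.finsetSum_apply, coeff_fiberSum]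

theorem mem_span_range_fiberSum [Finite A] {w : MonoidAlgebra F (A × H)} {f : A → F}
    (hw : ∀ c d, w.coeff (c, d) = f c) :
    w ∈ Submodule.span F (Set.range (fiberSum F H : A → MonoidAlgebra F (A × H))) := by
  have := Fintype.ofFinite A
  have w_eq : w = ∑ c, f c • fiberSum F H c := by
    ext ⟨c, d⟩
    rw [hw, coeff_sum_smul_fiberSum]
  rw [w_eq]
  exact Submodule.sum_mem _ fun c _ => Submodule.smul_mem _ _ (Submodule.subset_span ⟨c, rfl⟩)

theorem fiberSum_mul_single [Monoid A] [Group H] (c a : A) (d : H) (t : F) :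
    fiberSum F H c * MonoidAlgebra.single (a, d) t = t • fiberSum F H (c * a) := by
  rw [fiberSum, fiberSum, Finset.sum_mul, Finset.smul_sum]
  exact Fintype.sum_equiv (Equiv.mulRight d) _ _ fun _ => by simp

theorem fiberSum_mul_fiberSum [Monoid A] [Group H] (c a : A) :
    fiberSum F H c * fiberSum F H a = Fintype.card H • fiberSum F H (c * a) := by
  conv_lhs => rw [fiberSum.eq_1 F H a, Finset.mul_sum]
  simp [fiberSum_mul_single]

end Semiring

theorem linearIndependent_fiberSum [Ring F] [Finite A] [Nonempty H] :
    LinearIndependent F (fiberSum F H : A → MonoidAlgebra F (A × H)) := by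
  have := Fintype.ofFinite A
  rw [Fintype.linearIndependent_iff]
  intro f hf c
  rw [← coeff_sum_smul_fiberSum f c (Classical.arbitrary H), hf]
  rfl

theorem fiberSum_mem_jacobson_bot [Ring F] [Monoid A] [Group H]
    (hH : (Fintype.card H : F) = 0) (c : A) :
    fiberSum F H c ∈ Ideal.jacobson (⊥ : Ideal (MonoidAlgebra F (A × H))) := by
  refine mem_jacobson_bot_of_forall_mul_mul_self_eq_zero fun y => ?_
  induction y using MonoidAlgebra.induction_linear with
  | zero => simp
  | add u v hu hv => rw [mul_add, add_mul, hu, hv, add_zero]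
  | single g t =>
    rw [fiberSum_mul_single, smul_mul_assoc, fiberSum_mul_fiberSum,
      ← Nat.cast_smul_eq_nsmul F, hH, zero_smul, smul_zero]

end FiberSum

theorem jacobson_bot_eq_span_fiberSum {F A : Type*} [Field F] [CharP F 2] [Group A] [Finite A]
    (hA : Odd (Nat.card A)) {n : ℕ} [NeZero n] (hn : Odd n) :
    (Ideal.jacobson (⊥ : Ideal (MonoidAlgebra F (A × DihedralGroup n)))).restrictScalars F =
      Submodule.span F (Set.range (fiberSum F (DihedralGroup n))) := by
  refine le_antisymm (fun w hw => ?_) ?_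
  · exact mem_span_range_fiberSum (coeff_eq_coeff_one_of_mem_jacobson_bot hA hn hw)
  · rw [Submodule.span_le]
    rintro _ ⟨c, rfl⟩
    refine fiberSum_mem_jacobson_bot ?_ c
    rw [DihedralGroup.card, Nat.cast_mul, Nat.cast_two, CharTwo.two_eq_zero, zero_mul]

theorem one_add_mul_sum_mul_eq_fiberSum {F A : Type*} [Semiring F] [Monoid A] {n : ℕ} [NeZero n]
    (c : A) :
    (1 + MonoidAlgebra.of F (A × DihedralGroup n) (1, DihedralGroup.sr 0)) *
        (∑ j : Fin n, MonoidAlgebra.of F (A × DihedralGroup n)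
          ((1, DihedralGroup.r 1) ^ (j : ℕ))) *
        MonoidAlgebra.of F (A × DihedralGroup n) (c, 1) =
      fiberSum F (DihedralGroup n) c := by
  have rotations : ∑ j : Fin n, MonoidAlgebra.of F (A × DihedralGroup n)
      ((1, DihedralGroup.r 1) ^ (j : ℕ)) = ∑ i, MonoidAlgebra.single (1, DihedralGroup.r i) 1 := by
    rw [← sum_fin_natCast_zmod]
    simp
  rw [rotations, MonoidAlgebra.of_apply, MonoidAlgebra.of_apply, add_mul, one_mul, Finset.mul_sum]
  simp [fiberSum, sum_dihedralGroup, add_mul, Finset.sum_mul]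

theorem stmt_3_general (F A : Type*) [Field F] [CharP F 2] [Group A] [Finite A]
    (hA : Odd (Nat.card A)) (n : ℕ) (hn : Odd n) :
    let G := A × DihedralGroup n
    let x : G := (1, DihedralGroup.sr 0)
    let y : G := (1, DihedralGroup.r 1)
    let X : G → MonoidAlgebra F G := MonoidAlgebra.of F G
    let a : A → MonoidAlgebra F G := fun c =>
      (1 + X x) * (∑ j : Fin n, X (y ^ (j : ℕ))) * X (c, 1)
    ((Ideal.jacobson (⊥ : Ideal (MonoidAlgebra F G)) : Set (MonoidAlgebra F G))
        = (Submodule.span F (Set.range a) : Submodule F (MonoidAlgebra F G))) ∧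
    Module.finrank F (Submodule.span F (Set.range a) : Submodule F (MonoidAlgebra F G)) =
      Nat.card A := by
  intro G x y X a
  have : NeZero n := ⟨hn.pos.ne'⟩
  have := Fintype.ofFinite A
  have a_eq : a = fiberSum F (DihedralGroup n) := funext one_add_mul_sum_mul_eq_fiberSum
  rw [a_eq]
  constructor
  · exact congrArg SetLike.coe (jacobson_bot_eq_span_fiberSum hA hn)
  · rw [finrank_span_eq_card linearIndependent_fiberSum, Nat.card_eq_fintype_card]

theorem range_multiplicative_zmod_three {α : Type*} (f : Multiplicative (ZMod 3) → α) :
    Set.range f = {f (.ofAdd 0), f (.ofAdd 1), f (.ofAdd 2)} := by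
  have univ_eq : (Set.univ : Set (Multiplicative (ZMod 3))) = {.ofAdd 0, .ofAdd 1, .ofAdd 2} :=
    (Set.eq_univ_of_forall (by decide)).symm
  rw [← Set.image_univ, univ_eq, Set.image_insert_eq, Set.image_pair]

/-- For `F` a finite field of characteristic 2 and `G = C₃ × D₁₀`, the Jacobson radical of
`FG` equals the `F`-span of the three elements `(1+x)(1+y+y²+y³+y⁴)zⁱ`, `i = 0, 1, 2`,
and has `F`-dimension 3. -/
theorem stmt_3 (F : Type) [Field F] [Fintype F] (k : ℕ) (hk : 0 < k)
    (hchar : CharP F 2) (hcard : Fintype.card F = 2 ^ k) :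
    let G := Multiplicative (ZMod 3) × DihedralGroup 5
    let x : G := (1, DihedralGroup.sr 0)
    let y : G := (1, DihedralGroup.r 1)
    let z : G := (Multiplicative.ofAdd 1, 1)
    let X : G → MonoidAlgebra F G := MonoidAlgebra.of F G
    let a : Fin 3 → MonoidAlgebra F G := fun i =>
      (1 + X x) * (∑ j : Fin 5, X (y ^ (j : ℕ))) * X (z ^ (i : ℕ))
    ((Ideal.jacobson (⊥ : Ideal (MonoidAlgebra F G)) : Set (MonoidAlgebra F G))
        = (Submodule.span F {a 0, a 1, a 2} : Submodule F (MonoidAlgebra F G))) ∧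
    Module.finrank F (Submodule.span F {a 0, a 1, a 2} : Submodule F (MonoidAlgebra F G)) = 3 := by
  have card_C3 : Nat.card (Multiplicative (ZMod 3)) = 3 := by simp
  have radical := stmt_3_general F (Multiplicative (ZMod 3)) (by rw [card_C3]; decide) 5 (by decide)
  dsimp only at radical
  rw [range_multiplicative_zmod_three, card_C3] at radical
  -- The powers `z ^ i` and the pairs `(ofAdd i, 1)` agree by evaluation.
  exact radical
end

section
/- Let F be a finite field of characteristic 2 and G = C_3 × D_10. Then J(FG)² = 0, i.e., the Jacobson radical of FG squares to zero. -/
/-!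
Clifford-theoretic argument of Villamayor. Let `N` be a normal subgroup of index `n` in `G` such
that `F[N]` is semisimple. Then `F[G]` is a sum of left ideals `F[G] W` with `W` a simple
`F[N]`-module. As an `F[N]`-module, `F[G] W` is the sum of the `n` translates `g W`, and these are
simple because `g` normalizes `F[N]`; so `F[G] W` has length at most `n`. Multiplication by the
radical `J` strictly decreases the length of a nonzero module of finite length, hence `Jⁿ` kills
every `F[G] W`, and `Jⁿ = 0`.

For `H` of odd order and `n` odd, the product of `H` with the rotations has odd order and index 2 in
`H × DihedralGroup n`, and its group algebra in characteristic 2 is semisimple by Maschke's theorem.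
-/

open Module (length)
open Submodule

section Length

variable {A B R M M' ι : Type*} [Ring A] [Ring B] [Ring R] [AddCommGroup M] [AddCommGroup M']
  [Module A M] [Module B M'] [Module R M]

theorem length_le_of_surjective_semilinear {σ : A →+* B} [RingHomSurjective σ]
    (f : M →ₛₗ[σ] M') (hf : Function.Surjective f) : length B M' ≤ length A M := by
  rw [← WithBot.coe_le_coe, Module.coe_length, Module.coe_length]
  exact Order.krullDim_le_of_strictMono _ (comap_strictMono_of_surjective hf)

theorem length_map_le {σ : A →+* B} [RingHomSurjective σ] (f : M →ₛₗ[σ] M')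
    (p : Submodule A M) : length B (p.map f) ≤ length A p :=
  length_le_of_surjective_semilinear (f.submoduleMap p) (f.submoduleMap_surjective p)

theorem length_iSup_le_sum [Fintype ι] (p : ι → Submodule A M) :
    length A ↥(⨆ i, p i) ≤ ∑ i, length A (p i) := by
  classical
  rw [iSup_eq_range_dfinsupp_lsum, ← Module.length_pi_of_fintype,
    ← (DFinsupp.linearEquivFunOnFintype (R := A) (M := fun i ↦ p i)).length_eq]
  exact Module.length_le_of_surjective _ (LinearMap.surjective_rangeRestrict _)

theorem length_jacobson_smul_lt {p : Submodule R M} (hp : p ≠ ⊥) (hlength : length R p ≠ ⊤) :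
    length R ↥(Ring.jacobson R • p) < length R p := by
  have : IsNoetherian R p :=
    (isFiniteLength_iff_isNoetherian_isArtinian.mp (Module.length_ne_top_iff.mp hlength)).1
  have smul_lt : Ring.jacobson R • p < p :=
    FG.jacobson_smul_lt hp (Module.Finite.iff_fg.mp inferInstance)
  rw [Module.length_submodule] at hlength
  rw [Module.length_submodule, Module.length_submodule]
  exact Order.height_strictMono smul_lt
    ((Order.height_mono smul_lt.le).trans_lt hlength.lt_top)

theorem jacobson_pow_smul_eq_bot_of_length_le {n : ℕ} {p : Submodule R M}
    (hp : length R p ≤ n) : Ring.jacobson R ^ n • p = ⊥ := by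
  induction n generalizing p with
  | zero =>
    have : Subsingleton p := Module.length_eq_zero_iff.mp (le_zero_iff.mp hp)
    rw [subsingleton_iff_eq_bot.mp this, smul_bot]
  | succ n ih =>
    rcases eq_or_ne p ⊥ with rfl | p_ne_bot
    · exact smul_bot _
    have length_lt := length_jacobson_smul_lt p_ne_bot
      (ne_top_of_le_ne_top (ENat.natCast_ne_top _) hp)
    rw [Submodule.pow_succ, Submodule.mul_smul]
    exact ih (ENat.lt_natCast_add_one_iff.mp (length_lt.trans_le hp))

end Length

theorem iSup_span_simple_eq_top (A R M : Type*) [Ring A] [Ring R] [SMul A R] [AddCommGroup M]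
    [Module A M] [Module R M] [IsScalarTower A R M] [IsSemisimpleModule A M] :
    ⨆ W : {W : Submodule A M // IsSimpleModule A W}, span R (W.1 : Set M) = ⊤ := by
  rw [eq_top_iff, ← restrictScalars_le A, restrictScalars_top,
    ← IsSemisimpleModule.sSup_simples_eq_top A M]
  exact sSup_le fun W hW w hw ↦ mem_iSup_of_mem ⟨W, hW⟩ (subset_span hw)

/-- Generators exhibiting `R` as a normalizing extension of `A`: elements `gen i` that span `R`
as a left `A`-module and normalize `A`, in the sense that moving scalars across `gen i` amounts to
applying the automorphism `twist i`. The image of `a` in `R` is written `a • 1`. -/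
structure NormalizingGenerators (A R ι : Type*) [Ring A] [Ring R] [Module A R] where
  gen : ι → R
  twist : ι → A ≃+* A
  gen_mul_smul_one (i : ι) (a : A) : gen i * (a • 1) = twist i a • gen i
  span_range_gen : span A (Set.range gen) = ⊤

namespace NormalizingGenerators

variable {A R ι M : Type*} [Ring A] [Ring R] [Module A R] [AddCommGroup M] [Module A M]
  [Module R M] [IsScalarTower A R M]

variable (M) in
/-- The action of a generator on an `R`-module, which is semilinear over `A`. It transports
`A`-submodules to their translates. -/
def genSMul (g : NormalizingGenerators A R ι) (i : ι) : M →ₛₗ[(g.twist i : A →+* A)] M where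
  toFun m := g.gen i • m
  map_add' := smul_add _
  map_smul' a m := by
    rw [RingHom.coe_coe, ← smul_assoc (g.twist i a), ← g.gen_mul_smul_one, mul_smul,
      smul_one_smul]

theorem restrictScalars_span_eq_iSup_map (g : NormalizingGenerators A R ι) (W : Submodule A M) :
    (span R (W : Set M)).restrictScalars A = ⨆ i, W.map (g.genSMul M i) := by
  apply le_antisymm
  · rw [← span_smul_of_span_eq_top g.span_range_gen, span_le]
    rintro _ ⟨_, ⟨i, rfl⟩, w, hw, rfl⟩
    exact mem_iSup_of_mem i ⟨w, hw, rfl⟩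
  · rw [iSup_le_iff]
    rintro i _ ⟨w, hw, rfl⟩
    exact (span R (W : Set M)).smul_mem _ (subset_span hw)

theorem length_span_le [Fintype ι] (g : NormalizingGenerators A R ι) (W : Submodule A M) :
    length R (span R (W : Set M)) ≤ Fintype.card ι * length A W :=
  calc length R (span R (W : Set M))
      ≤ length A ((span R (W : Set M)).restrictScalars A) := length_le_length_restrictScalars A _
    _ = length A ↥(⨆ i, W.map (g.genSMul M i)) := by rw [g.restrictScalars_span_eq_iSup_map]
    _ ≤ ∑ i, length A (W.map (g.genSMul M i)) := length_iSup_le_sum _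
    _ ≤ ∑ _i : ι, length A W := Finset.sum_le_sum fun i _ ↦ length_map_le (g.genSMul M i) W
    _ = Fintype.card ι * length A W := by rw [Finset.sum_const, Finset.card_univ, nsmul_eq_mul]

theorem jacobson_pow_card_smul_top_eq_bot [Fintype ι] [IsSemisimpleModule A M]
    (g : NormalizingGenerators A R ι) :
    Ring.jacobson R ^ Fintype.card ι • (⊤ : Submodule R M) = ⊥ := by
  rw [← iSup_span_simple_eq_top A R M, smul_iSup, iSup_eq_bot]
  rintro ⟨W, hW⟩
  apply jacobson_pow_smul_eq_bot_of_length_le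
  simpa only [Module.length_eq_one, mul_one] using g.length_span_le W

theorem jacobson_pow_card_eq_bot [Fintype ι] [IsSemisimpleRing A] [IsScalarTower A R R]
    (g : NormalizingGenerators A R ι) : Ring.jacobson R ^ Fintype.card ι = ⊥ := by
  rw [eq_bot_iff, ← g.jacobson_pow_card_smul_top_eq_bot (M := R)]
  intro r hr
  simpa only [smul_eq_mul, mul_one] using smul_mem_smul hr (mem_top (x := (1 : R)))

end NormalizingGenerators

section GroupAlgebra

open MonoidAlgebra

variable {k G : Type*} [Ring k] [Group G] {N : Subgroup G}

/-- The group algebra of `G` as a left module over the group algebra of a subgroup. -/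
noncomputable local instance moduleSubgroupAlgebra : Module k[N] k[G] :=
  Module.compHom _ (mapDomainRingHom k N.subtype)

local instance isScalarTower_subgroupAlgebra : IsScalarTower k[N] k[G] k[G] :=
  ⟨fun _ _ _ ↦ mul_assoc _ _ _⟩

theorem single_smul_single (h : N) (g : G) (r s : k) :
    (single h r : k[N]) • (single g s : k[G]) = single (h * g) (r * s) := by
  change mapDomainRingHom k N.subtype (single h r) * single g s = _
  simp

theorem single_mul_smul_one [N.Normal] (g : G) (a : k[N]) :
    single g 1 * (a • (1 : k[G])) =
      mapDomainRingEquiv k (MulAut.conjNormal g) a • (single g 1 : k[G]) := by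
  induction a using MonoidAlgebra.induction_linear with
  | zero => simp
  | add x y hx hy => rw [add_smul, mul_add, hx, hy, map_add, add_smul]
  | single h r => simp [one_def, single_smul_single]

theorem span_range_single_out_eq_top [N.Normal] :
    span k[N] (Set.range fun q : G ⧸ N ↦ (single q.out 1 : k[G])) = ⊤ := by
  rw [eq_top_iff]
  rintro x -
  induction x using MonoidAlgebra.induction_linear with
  | zero => exact zero_mem _
  | add x y hx hy => exact add_mem hx hy
  | single g r =>
    obtain ⟨h, out_eq⟩ := QuotientGroup.mk_out_eq_mul N g
    have single_eq : single g r =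
        (single (MulAut.conjNormal g h⁻¹) r : k[N]) • (single (g : G ⧸ N).out 1 : k[G]) := by
      rw [single_smul_single, out_eq]
      simp [mul_assoc]
    rw [single_eq]
    exact smul_mem _ _ (subset_span ⟨_, rfl⟩)

variable (k N) in
/-- Coset representatives of a normal subgroup `N` as generators of `k[G]` over `k[N]`, which they
normalize by conjugation. -/
noncomputable def cosetGenerators [N.Normal] : NormalizingGenerators k[N] k[G] (G ⧸ N) where
  gen q := single q.out 1
  twist q := mapDomainRingEquiv k (MulAut.conjNormal q.out)
  gen_mul_smul_one q := single_mul_smul_one q.out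
  span_range_gen := span_range_single_out_eq_top

theorem jacobson_pow_index_eq_bot [N.Normal] [N.FiniteIndex] [IsSemisimpleRing k[N]] :
    Ring.jacobson k[G] ^ N.index = ⊥ := by
  have := Fintype.ofFinite (G ⧸ N)
  rw [Subgroup.index, Nat.card_eq_fintype_card]
  exact (cosetGenerators k N).jacobson_pow_card_eq_bot

theorem jacobson_pow_index_eq_bot_of_card_ne_zero {F : Type*} [Field F] [N.Normal]
    [N.FiniteIndex] (hN : (Nat.card N : F) ≠ 0) : Ring.jacobson F[G] ^ N.index = ⊥ := by
  have : NeZero (Nat.card N : F) := ⟨hN⟩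
  have : Finite N := Nat.finite_of_card_ne_zero fun h ↦ hN (by rw [h, Nat.cast_zero])
  exact jacobson_pow_index_eq_bot

end GroupAlgebra

theorem index_zpowers_r_one (n : ℕ) [NeZero n] :
    (Subgroup.zpowers (.r 1 : DihedralGroup n)).index = 2 := by
  have card_mul_index := (Subgroup.zpowers (.r 1 : DihedralGroup n)).card_mul_index
  rw [Nat.card_zpowers, DihedralGroup.orderOf_r_one, DihedralGroup.nat_card, mul_comm 2]
    at card_mul_index
  exact Nat.eq_of_mul_eq_mul_left (NeZero.pos n) card_mul_index

theorem stmt_4_general {F H : Type*} [Field F] [CharP F 2] [Group H] (hH : Odd (Nat.card H))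
    {n : ℕ} (hn : Odd n) {a b : MonoidAlgebra F (H × DihedralGroup n)}
    (ha : a ∈ Ideal.jacobson (⊥ : Ideal (MonoidAlgebra F (H × DihedralGroup n))))
    (hb : b ∈ Ideal.jacobson (⊥ : Ideal (MonoidAlgebra F (H × DihedralGroup n)))) :
    a * b = 0 := by
  have : NeZero n := ⟨hn.pos.ne'⟩
  let rotations := Subgroup.zpowers (.r 1 : DihedralGroup n)
  let N : Subgroup (H × DihedralGroup n) := (⊤ : Subgroup H).prod rotations
  have index_eq : N.index = 2 := by
    rw [Subgroup.index_prod, Subgroup.index_top, one_mul, index_zpowers_r_one]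
  have card_eq : Nat.card N = Nat.card H * n := by
    rw [Nat.card_congr (Subgroup.prodEquiv _ _).toEquiv, Nat.card_prod, Subgroup.card_top,
      Nat.card_zpowers, DihedralGroup.orderOf_r_one]
  have card_ne_zero : (Nat.card N : F) ≠ 0 := by
    rw [card_eq, Ne, CharP.cast_eq_zero_iff F 2]
    exact (hH.mul hn).not_two_dvd_nat
  have : N.Normal := Subgroup.normal_of_index_eq_two index_eq
  have : N.FiniteIndex := ⟨index_eq ▸ two_ne_zero⟩
  rw [Ideal.jacobson_bot] at ha hb
  rw [← Ideal.mem_bot, ← jacobson_pow_index_eq_bot_of_card_ne_zero card_ne_zero, index_eq,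
    Submodule.pow_succ, Submodule.pow_one]
  exact Ideal.mul_mem_mul ha hb

/-- For `F` a finite field of characteristic 2 and `G = C₃ × D₁₀`, the Jacobson radical of
`FG` squares to zero. -/
theorem stmt_4 (F : Type) [Field F] [Fintype F] (hchar : CharP F 2) :
    let G := Multiplicative (ZMod 3) × DihedralGroup 5
    ∀ a b : MonoidAlgebra F G,
      a ∈ Ideal.jacobson (⊥ : Ideal (MonoidAlgebra F G)) →
      b ∈ Ideal.jacobson (⊥ : Ideal (MonoidAlgebra F G)) →
      a * b = 0 := by
  have odd_card : Odd (Nat.card (Multiplicative (ZMod 3))) := by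
    rw [Nat.card_congr Multiplicative.toAdd, Nat.card_zmod]; decide
  exact fun _ _ ↦ stmt_4_general odd_card (by decide)
end

section
/- Let F be a finite field with q elements, q ≡ 1 or 4 (mod 15), of characteristic 2. Then FG/J(FG) ≅ F³ ⊕ M₂(F)⁶ as F-algebras, where G = C_3 × D_10. -/
/-!
A primitive cube root of unity `ω` gives the three characters of `C₃`. In characteristic 2 it also
satisfies `τ ^ 2 + τ = 1` for `τ = ω, ω ^ 2`, which is the equation for the trace of a rotation of
order five, so both two-dimensional representations of `D₁₀` are defined over `F`. Tensoring gives
three one-dimensional and six two-dimensional representations of `C₃ × D₁₀`. The central elements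
`c ∈ C₃` and `r + r⁻¹` act by distinct pairs of scalars on the six, `c` separates the three, and the
sum of the rotations separates the three from the six, so the product map is surjective.

Its kernel has dimension `30 - (3 + 6 * 4) = 3`, hence equals `F[C₃] * s` with `s` the sum of the
elements of `D₁₀`. As `s ^ 2 = 10 s = 0`, the kernel is a nil ideal, and since the target is
semisimple it is the whole radical.
-/

open MonoidAlgebra Matrix

section Jacobson

variable {R S : Type*} [Ring R] [Ring S]

theorem mem_jacobson_bot_of_forall_isNilpotent_mul {x : R} (hx : ∀ y, IsNilpotent (y * x)) :
    x ∈ Ideal.jacobson (⊥ : Ideal R) := by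
  rw [Ideal.mem_jacobson_iff]
  intro y
  obtain ⟨u, hu⟩ := (hx y).isUnit_add_one
  have hinv : (↑u⁻¹ : R) * (y * x + 1) = 1 := hu ▸ u.inv_mul
  exact ⟨↑u⁻¹, by rw [Ideal.mem_bot, mul_assoc, ← mul_add_one, hinv, sub_self]⟩

theorem ker_eq_jacobson_bot_of_forall_isNilpotent [IsSemisimpleRing S] {f : R →+* S}
    (hf : Function.Surjective f) (hker : ∀ x ∈ RingHom.ker f, IsNilpotent x) :
    RingHom.ker f = Ideal.jacobson (⊥ : Ideal R) := by
  apply le_antisymm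
  · exact fun x hx ↦ mem_jacobson_bot_of_forall_isNilpotent_mul fun y ↦
      hker _ (Ideal.mul_mem_left _ y hx)
  · have : RingHomSurjective f := ⟨hf⟩
    have hle := Ring.le_comap_jacobson f
    rwa [IsSemisimpleRing.jacobson_eq_bot S, ← RingHom.ker_eq_comap_bot,
      ← Ideal.jacobson_bot] at hle

end Jacobson

section ChineseRemainder

theorem algHom_prod_surjective {k R S T : Type*} [CommSemiring k] [Ring R] [Ring S] [Ring T]
    [Algebra k R] [Algebra k S] [Algebra k T] {f : R →ₐ[k] S} {g : R →ₐ[k] T}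
    (hf : Function.Surjective f) (hg : Function.Surjective g) (hsep : ∃ e, f e = 1 ∧ g e = 0) :
    Function.Surjective (f.prod g) := by
  rintro ⟨s, t⟩
  obtain ⟨e, hfe, hge⟩ := hsep
  obtain ⟨x, rfl⟩ := hf s
  obtain ⟨y, rfl⟩ := hg t
  exact ⟨y + e * (x - y), by simp [hfe, hge]⟩

variable {k R ι : Type*} [CommSemiring k] [Semiring R] [Algebra k R]
  {S : ι → Type*} [∀ i, Semiring (S i)] [∀ i, Algebra k (S i)] {f : ∀ i, R →ₐ[k] S i}

theorem exists_map_eq_one_forall_mem_map_eq_zero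
    (hsep : ∀ i j, i ≠ j → ∃ e, f i e = 1 ∧ f j e = 0) {i : ι} {s : Finset ι} (hi : i ∉ s) :
    ∃ e, f i e = 1 ∧ ∀ j ∈ s, f j e = 0 := by
  classical
  induction s using Finset.induction_on with
  | empty => exact ⟨1, map_one _, by simp⟩
  | insert j s _ ih =>
    rw [Finset.mem_insert, not_or] at hi
    obtain ⟨e, hie, hse⟩ := ih hi.2
    obtain ⟨d, hid, hjd⟩ := hsep i j hi.1
    refine ⟨e * d, by simp [hie, hid], fun l hl ↦ ?_⟩
    rcases Finset.mem_insert.1 hl with rfl | hl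
    · simp [hjd]
    · simp [hse l hl]

theorem algHom_pi_surjective [Finite ι] (hf : ∀ i, Function.Surjective (f i))
    (hsep : ∀ i j, i ≠ j → ∃ e, f i e = 1 ∧ f j e = 0) :
    Function.Surjective (AlgHom.pi f) := by
  classical
  cases nonempty_fintype ι
  intro y
  choose x hx using fun i ↦ hf i (y i)
  choose e he_one he_zero using fun i ↦
    exists_map_eq_one_forall_mem_map_eq_zero hsep (Finset.notMem_erase i Finset.univ)
  refine ⟨∑ i, e i * x i, funext fun j ↦ ?_⟩
  have hoff (i : ι) (hij : i ≠ j) : f j (e i * x i) = 0 := by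
    rw [map_mul, he_zero i j (Finset.mem_erase.2 ⟨hij.symm, Finset.mem_univ j⟩), zero_mul]
  rw [AlgHom.pi_apply, map_sum, Fintype.sum_eq_single j hoff, map_mul, he_one, hx, one_mul]

theorem exists_map_eq_one_map_eq_zero {F R S T : Type*} [Field F] [Ring R] [Algebra F R]
    [Ring S] [Algebra F S] [Ring T] [Algebra F T] {f : R →ₐ[F] S} {g : R →ₐ[F] T} {x : R} {a b : F}
    (hab : a ≠ b) (hfx : f x = algebraMap F S a) (hgx : g x = algebraMap F T b) :
    ∃ e, f e = 1 ∧ g e = 0 := by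
  refine ⟨(a - b)⁻¹ • (x - algebraMap F R b), ?_, ?_⟩
  · rw [map_smul, map_sub, hfx, AlgHom.commutes, ← map_sub, Algebra.smul_def, ← map_mul,
      inv_mul_cancel₀ (sub_ne_zero.2 hab), map_one]
  · rw [map_smul, map_sub, hgx, AlgHom.commutes, sub_self, smul_zero]

end ChineseRemainder

section GroupSum

variable (k H : Type*) [CommSemiring k] [Group H] [Fintype H]

/-- The sum of all elements of a finite group, as an element of its group algebra. -/
noncomputable def groupSum : k[H] := ∑ h, of k H h

variable {k H}

theorem of_mul_groupSum (h : H) : of k H h * groupSum k H = groupSum k H := by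
  simp only [groupSum, Finset.mul_sum, ← map_mul]
  exact Fintype.sum_equiv (Equiv.mulLeft h) _ _ fun _ ↦ rfl

theorem groupSum_mul_self : groupSum k H * groupSum k H = Fintype.card H • groupSum k H := by
  nth_rw 1 [groupSum]
  simp only [Finset.sum_mul, of_mul_groupSum, Finset.sum_const, Finset.card_univ]

theorem lift_eq_zero_of_of_mul_eq_self {k G B : Type*} [CommSemiring k] [Monoid G] [Ring B]
    [Algebra k B] {ρ : G →* B} {g : G} (hg : IsUnit (ρ g - 1)) {x : k[G]}
    (hx : of k G g * x = x) : MonoidAlgebra.lift k B G ρ x = 0 := by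
  have hfix : ρ g * MonoidAlgebra.lift k B G ρ x = MonoidAlgebra.lift k B G ρ x := by
    rw [← lift_of (R := k) ρ g, ← map_mul, hx]
  rw [← hg.mul_right_eq_zero, sub_one_mul, hfix, sub_self]

end GroupSum

section Product

variable {k A H B : Type*} [CommSemiring k] [Monoid A] [Monoid H] [Semiring B] [Algebra k B]

variable (k A H) in
/-- The inclusion `k[A] → k[A × H]` induced by `a ↦ (a, 1)`. -/
noncomputable abbrev inlAlgHom : k[A] →ₐ[k] k[A × H] :=
  mapDomainAlgHom k k (MonoidHom.inl A H)

variable (k A H) in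
/-- The inclusion `k[H] → k[A × H]` induced by `h ↦ (1, h)`. -/
noncomputable abbrev inrAlgHom : k[H] →ₐ[k] k[A × H] :=
  mapDomainAlgHom k k (MonoidHom.inr A H)

theorem commute_inlAlgHom_inrAlgHom (x : k[A]) (y : k[H]) :
    Commute (inlAlgHom k A H x) (inrAlgHom k A H y) := by
  induction x using MonoidAlgebra.induction_linear with
  | zero => simp
  | add x₁ x₂ h₁ h₂ => rw [map_add]; exact h₁.add_left h₂
  | single a c =>
    induction y using MonoidAlgebra.induction_linear with
    | zero => simp
    | add y₁ y₂ h₁ h₂ => rw [map_add]; exact h₁.add_right h₂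
    | single h d => simp [Commute, SemiconjBy, single_mul_single, mul_comm]

/-- The representation `(a, h) ↦ χ a • ρ h` of `A × H`, for a linear character `χ` of `A` and a
representation `ρ` of `H`, extended to the monoid algebra. -/
noncomputable def twistedLift (χ : A →* k) (ρ : H →* B) : k[A × H] →ₐ[k] B :=
  MonoidAlgebra.lift k B (A × H) <|
    ((algebraMap k B : k →* B).comp χ).noncommCoprod ρ fun _ _ ↦ Algebra.commutes _ _

theorem twistedLift_single (χ : A →* k) (ρ : H →* B) (a : A) (h : H) (c : k) :
    twistedLift χ ρ (single (a, h) c) = c • (algebraMap k B (χ a) * ρ h) :=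
  lift_single _ _ _

theorem twistedLift_inlAlgHom_of (χ : A →* k) (ρ : H →* B) (a : A) :
    twistedLift χ ρ (inlAlgHom k A H (of k A a)) = algebraMap k B (χ a) := by
  simp [twistedLift_single]

theorem twistedLift_inrAlgHom (χ : A →* k) (ρ : H →* B) (y : k[H]) :
    twistedLift χ ρ (inrAlgHom k A H y) = MonoidAlgebra.lift k B H ρ y := by
  suffices (twistedLift χ ρ).comp (inrAlgHom k A H) = MonoidAlgebra.lift k B H ρ from
    DFunLike.congr_fun this y
  ext h
  simp [twistedLift_single]

theorem twistedLift_surjective (χ : A →* k) {ρ : H →* B}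
    (hρ : Function.Surjective (MonoidAlgebra.lift k B H ρ)) :
    Function.Surjective (twistedLift χ ρ) := fun b ↦
  let ⟨y, hy⟩ := hρ b
  ⟨inrAlgHom k A H y, (twistedLift_inrAlgHom χ ρ y).trans hy⟩

end Product

section Kernel

variable (k A H : Type*) [CommSemiring k] [Monoid A] [Group H] [Fintype H]

/-- The map `k[A] → k[A × H]`, `x ↦ x * ∑ h`. Its image is the radical in the situation of
`ker_eq_jacobson_bot_of_finrank`. -/
noncomputable def mulGroupSum : k[A] →ₗ[k] k[A × H] :=
  LinearMap.mulRight k (inrAlgHom k A H (groupSum k H)) ∘ₗ (inlAlgHom k A H).toLinearMap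

variable {k A H}

theorem mulGroupSum_apply (x : k[A]) :
    mulGroupSum k A H x = inlAlgHom k A H x * inrAlgHom k A H (groupSum k H) := rfl

theorem coeff_mulGroupSum (x : k[A]) (a : A) (h : H) :
    (mulGroupSum k A H x).coeff (a, h) = x.coeff a := by
  classical
  induction x using MonoidAlgebra.induction_linear with
  | zero => simp
  | add x₁ x₂ h₁ h₂ => simp only [map_add, coeff_add, Finsupp.add_apply, h₁, h₂]
  | single a c =>
    simp [mulGroupSum_apply, groupSum, Finset.mul_sum, single_mul_single, Finsupp.single_apply,
      ite_and]

theorem mulGroupSum_injective : Function.Injective (mulGroupSum k A H) := by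
  intro x y hxy
  ext a
  rw [← coeff_mulGroupSum x a (1 : H), hxy, coeff_mulGroupSum]

theorem mulGroupSum_mul_self (hH : (Fintype.card H : k) = 0) (x : k[A]) :
    mulGroupSum k A H x * mulGroupSum k A H x = 0 := by
  have hsq : groupSum k H * groupSum k H = 0 := by
    rw [groupSum_mul_self, ← Nat.cast_smul_eq_nsmul k, hH, zero_smul]
  rw [mulGroupSum_apply, (commute_inlAlgHom_inrAlgHom x _).symm.mul_mul_mul_comm, ← map_mul,
    ← map_mul, hsq, map_zero, mul_zero]

theorem finrank_monoidAlgebra (F G : Type*) [Field F] [Fintype G] :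
    Module.finrank F F[G] = Fintype.card G := by
  rw [(coeffLinearEquiv F (S := F) (M := G)).finrank_eq, Module.finrank_finsupp_self]

variable {F : Type*} [Field F] [Fintype A] {B : Type*} [Ring B] [Algebra F B]

theorem range_mulGroupSum_eq_ker {φ : F[A × H] →ₐ[F] B} (hφ : Function.Surjective φ)
    (hsum : φ (inrAlgHom F A H (groupSum F H)) = 0)
    (hrank : Module.finrank F B + Fintype.card A = Fintype.card A * Fintype.card H) :
    LinearMap.range (mulGroupSum F A H) = LinearMap.ker φ.toLinearMap := by
  have : FiniteDimensional F F[A × H] :=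
    Module.Finite.equiv (coeffLinearEquiv F (S := F) (M := A × H)).symm
  apply Submodule.eq_of_le_of_finrank_eq
  · rintro _ ⟨x, rfl⟩
    rw [LinearMap.mem_ker, AlgHom.toLinearMap_apply, mulGroupSum_apply, map_mul, hsum, mul_zero]
  · have hnullity := LinearMap.finrank_range_add_finrank_ker φ.toLinearMap
    rw [LinearMap.range_eq_top.2 hφ, finrank_top, finrank_monoidAlgebra, Fintype.card_prod,
      ← hrank] at hnullity
    rw [LinearMap.finrank_range_of_inj mulGroupSum_injective, finrank_monoidAlgebra]
    exact (Nat.add_left_cancel hnullity).symm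

theorem ker_eq_jacobson_bot_of_finrank [IsSemisimpleRing B] {φ : F[A × H] →ₐ[F] B}
    (hφ : Function.Surjective φ) (hH : (Fintype.card H : F) = 0)
    (hsum : φ (inrAlgHom F A H (groupSum F H)) = 0)
    (hrank : Module.finrank F B + Fintype.card A = Fintype.card A * Fintype.card H) :
    RingHom.ker φ.toRingHom = Ideal.jacobson (⊥ : Ideal F[A × H]) := by
  refine ker_eq_jacobson_bot_of_forall_isNilpotent hφ fun u hu ↦ ⟨2, ?_⟩
  obtain ⟨x, rfl⟩ : u ∈ LinearMap.range (mulGroupSum F A H) := by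
    rw [range_mulGroupSum_eq_ker hφ hsum hrank]
    exact hu
  rw [sq, mulGroupSum_mul_self hH]

end Kernel

section Dihedral

theorem pow_val_add_of_pow_eq_one {M : Type*} [Monoid M] {n : ℕ} [NeZero n] {x : M}
    (hx : x ^ n = 1) (i j : ZMod n) : x ^ (i + j).val = x ^ i.val * x ^ j.val := by
  rw [ZMod.val_add, ← pow_add, ← pow_eq_pow_mod _ hx]

theorem pow_mul_mul_pow_of_mul_mul_eq {M : Type*} [Monoid M] {x y : M} (hxy : x * y * x = y)
    (m : ℕ) : x ^ m * y * x ^ m = y := by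
  induction m with
  | zero => simp
  | succ m ih =>
    calc x ^ (m + 1) * y * x ^ (m + 1) = x ^ m * (x * y * x) * x ^ m := by
          simp only [pow_succ x, ← pow_succ' x, mul_assoc]
      _ = y := by rw [hxy, ih]

/-- The homomorphism out of the dihedral group given by its presentation
`⟨x, y | x ^ n = y ^ 2 = 1, x * y * x = y⟩`, with `r 1 ↦ x` and `sr 0 ↦ y`. -/
def dihedralLift {M : Type*} [Monoid M] {n : ℕ} [NeZero n] {x y : M} (hx : x ^ n = 1)
    (hy : y * y = 1) (hxy : x * y * x = y) : DihedralGroup n →* M where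
  toFun
    | .r i => x ^ i.val
    | .sr i => y * x ^ i.val
  map_one' := by simp [DihedralGroup.one_def, -DihedralGroup.r_zero]
  map_mul' g h := by
    have hadd := pow_val_add_of_pow_eq_one hx
    have hconj (i j : ZMod n) : x ^ i.val * (y * x ^ j.val) = y * x ^ (j - i).val := by
      nth_rw 1 [← add_sub_cancel i j]
      rw [hadd, ← mul_assoc, ← mul_assoc, pow_mul_mul_pow_of_mul_mul_eq hxy]
    rcases g with i | i <;> rcases h with j | j
    · exact hadd i j
    · exact (hconj i j).symm
    · exact (congrArg (y * ·) (hadd i j)).trans (mul_assoc _ _ _).symm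
    · simp only [DihedralGroup.sr_mul_sr, mul_assoc, hconj]
      rw [← mul_assoc, hy, one_mul]

variable {R : Type*} [CommRing R]

/-- The companion matrix of `X ^ 2 - τ X + 1`: a rotation of determinant one and trace `τ`, written
without the eigenvalues, which need not lie in `R`. -/
def rotationMatrix (τ : R) : Matrix (Fin 2) (Fin 2) R := !![0, -1; 1, τ]

variable (R) in
/-- The swap of the two coordinates, which inverts every `rotationMatrix` by conjugation. -/
def reflectionMatrix : Matrix (Fin 2) (Fin 2) R := !![0, 1; 1, 0]

theorem reflectionMatrix_mul_self : reflectionMatrix R * reflectionMatrix R = 1 := by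
  simp [reflectionMatrix, one_fin_two]

theorem rotationMatrix_mul_reflectionMatrix_mul_rotationMatrix (τ : R) :
    rotationMatrix τ * reflectionMatrix R * rotationMatrix τ = reflectionMatrix R := by
  simp [rotationMatrix, reflectionMatrix]

theorem rotationMatrix_sq (τ : R) : rotationMatrix τ ^ 2 = τ • rotationMatrix τ - 1 := by
  ext i j
  fin_cases i <;> fin_cases j <;> simp [rotationMatrix, sq, neg_add_eq_sub]

theorem rotationMatrix_mul_smul_one_sub (τ : R) :
    rotationMatrix τ * (τ • 1 - rotationMatrix τ) = 1 := by
  rw [mul_sub, mul_smul_comm, mul_one, ← sq, rotationMatrix_sq, sub_sub_cancel]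

theorem rotationMatrix_pow_five {τ : R} (hτ : τ ^ 2 + τ = 1) : rotationMatrix τ ^ 5 = 1 := by
  have hmul : τ * τ = 1 - τ := by linear_combination hτ
  have hsq : rotationMatrix τ ^ 2 = !![-1, -τ; τ, -τ] := by
    simp [rotationMatrix, sq, hmul, neg_add_eq_sub]
  have hcube : rotationMatrix τ ^ 3 = !![-τ, τ; -τ, -1] := by
    rw [pow_succ, hsq, rotationMatrix]
    simp [hmul, neg_add_eq_sub]
  rw [pow_add _ 2 3, hsq, hcube]
  simp [one_fin_two, hmul]

theorem isUnit_rotationMatrix_sub_one {τ : R} (hτ : IsUnit (2 - τ)) :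
    IsUnit (rotationMatrix τ - 1) := by
  have hsub : rotationMatrix τ - 1 = !![-1, -1; 1, τ - 1] := by
    simp [rotationMatrix, one_fin_two]
  have hdet : (rotationMatrix τ - 1).det = 2 - τ := by
    rw [hsub, det_fin_two_of]
    ring
  rwa [isUnit_iff_isUnit_det, hdet]

theorem exists_eq_linearCombination_rotationMatrix_reflectionMatrix {F : Type*} [Field F] {τ : F}
    (hτ : τ ^ 2 ≠ 4) (M : Matrix (Fin 2) (Fin 2) F) :
    ∃ a b c d : F, M = a • 1 + b • rotationMatrix τ + c • reflectionMatrix F +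
      d • (rotationMatrix τ * reflectionMatrix F) := by
  have hdisc : 4 - τ ^ 2 ≠ 0 := sub_ne_zero.2 hτ.symm
  obtain ⟨b, d, hoff, hdiag⟩ : ∃ b d, M 1 0 = b + (M 0 1 + b) + d * τ ∧
      M 1 1 = M 0 0 + d + b * τ + d := by
    refine ⟨(2 * (M 1 0 - M 0 1) - τ * (M 1 1 - M 0 0)) / (4 - τ ^ 2),
      (2 * (M 1 1 - M 0 0) - τ * (M 1 0 - M 0 1)) / (4 - τ ^ 2), ?_, ?_⟩ <;>
    · field_simp
      ring
  refine ⟨M 0 0 + d, b, M 0 1 + b, d, ?_⟩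
  ext i j
  fin_cases i <;> fin_cases j <;> simp [rotationMatrix, reflectionMatrix, hoff, hdiag]

theorem sq_ne_four_of_rotationMatrix_pow_eq_one {F : Type*} [Field F] [CharP F 2] {n : ℕ}
    (hn : Odd n) {τ : F} (hτ : rotationMatrix τ ^ n = 1) : τ ^ 2 ≠ 4 := by
  intro hfour
  obtain rfl : τ = 0 := by
    rw [← sq_eq_zero_iff]
    linear_combination hfour + 2 * CharTwo.two_eq_zero (R := F)
  have hsq : rotationMatrix (0 : F) ^ 2 = 1 := by
    rw [rotationMatrix_sq, zero_smul, zero_sub, CharTwo.neg_eq]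
  obtain ⟨m, rfl⟩ := hn
  rw [pow_succ, pow_mul, hsq, one_pow, one_mul] at hτ
  simpa [rotationMatrix] using congrFun₂ hτ 0 0

variable {n : ℕ} [NeZero n]

/-- The two-dimensional representation of the dihedral group in which the generating rotation has
trace `τ`. -/
def dihedralRep {τ : R} (hτ : rotationMatrix τ ^ n = 1) :
    DihedralGroup n →* Matrix (Fin 2) (Fin 2) R :=
  dihedralLift hτ reflectionMatrix_mul_self
    (rotationMatrix_mul_reflectionMatrix_mul_rotationMatrix τ)

theorem dihedralRep_r_one {τ : R} (hτ : rotationMatrix τ ^ n = 1) :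
    dihedralRep hτ (.r 1) = rotationMatrix τ := by
  change rotationMatrix τ ^ (1 : ZMod n).val = _
  rw [ZMod.val_one_eq_one_mod, ← pow_eq_pow_mod _ hτ, pow_one]

theorem dihedralRep_sr_zero {τ : R} (hτ : rotationMatrix τ ^ n = 1) :
    dihedralRep hτ (.sr 0) = reflectionMatrix R := by
  change reflectionMatrix R * rotationMatrix τ ^ (0 : ZMod n).val = _
  rw [ZMod.val_zero, pow_zero, mul_one]

theorem dihedralRep_r_one_add_r_neg_one {τ : R} (hτ : rotationMatrix τ ^ n = 1) :
    dihedralRep hτ (.r 1) + dihedralRep hτ (.r (-1)) = algebraMap R _ τ := by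
  have hleft : dihedralRep hτ (.r (-1)) * rotationMatrix τ = 1 := by
    rw [← dihedralRep_r_one hτ, ← map_mul, DihedralGroup.r_mul_r, neg_add_cancel,
      DihedralGroup.r_zero, map_one]
  rw [left_inv_eq_right_inv hleft (rotationMatrix_mul_smul_one_sub τ), dihedralRep_r_one,
    add_sub_cancel, Algebra.algebraMap_eq_smul_one]

theorem lift_dihedralRep_surjective {F : Type*} [Field F] {τ : F} (hdisc : τ ^ 2 ≠ 4)
    (hτ : rotationMatrix τ ^ n = 1) :
    Function.Surjective (MonoidAlgebra.lift F _ _ (dihedralRep hτ)) := by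
  intro M
  obtain ⟨a, b, c, d, rfl⟩ :=
    exists_eq_linearCombination_rotationMatrix_reflectionMatrix hdisc M
  let x := of F (DihedralGroup n) (.r 1)
  let y := of F (DihedralGroup n) (.sr 0)
  refine ⟨a • 1 + b • x + c • y + d • (x * y), ?_⟩
  simp only [map_add, map_smul, map_mul, map_one, x, y, lift_of, dihedralRep_r_one,
    dihedralRep_sr_zero]

variable (R n) in
/-- The sum of the rotations, as an element of the algebra of the dihedral group. -/
noncomputable def rotationSum : R[DihedralGroup n] := ∑ i : ZMod n, of R _ (.r i)

theorem of_r_one_mul_rotationSum :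
    of R (DihedralGroup n) (.r 1) * rotationSum R n = rotationSum R n := by
  simp only [rotationSum, Finset.mul_sum, ← map_mul, DihedralGroup.r_mul_r]
  exact Fintype.sum_equiv (Equiv.addLeft 1) _ _ fun _ ↦ rfl

theorem lift_one_rotationSum :
    MonoidAlgebra.lift R R (DihedralGroup n) 1 (rotationSum R n) = n := by
  simp [rotationSum]

end Dihedral

section Decomposition

variable {F : Type*} [Field F] {A : Type*} [Monoid A]

theorem exists_twistedLift_eq_one_eq_zero {H S T : Type*} [Monoid H] [Ring S] [Algebra F S]
    [Ring T] [Algebra F T] {χ χ' : A →* F} (hχ : χ ≠ χ') (ρ : H →* S) (σ : H →* T) :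
    ∃ e, twistedLift χ ρ e = 1 ∧ twistedLift χ' σ e = 0 := by
  obtain ⟨a, ha⟩ := DFunLike.ne_iff.1 hχ
  exact exists_map_eq_one_map_eq_zero ha (twistedLift_inlAlgHom_of χ ρ a)
    (twistedLift_inlAlgHom_of χ' σ a)

theorem pi_twistedLift_one_surjective {H ι : Type*} [Monoid H] [Finite ι] {χ : ι → A →* F}
    (hχ : Function.Injective χ) :
    Function.Surjective (AlgHom.pi fun i ↦ twistedLift (χ i) (1 : H →* F)) :=
  algHom_pi_surjective (fun _ c ↦ ⟨algebraMap F _ c, AlgHom.commutes _ _⟩)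
    fun _ _ hij ↦ exists_twistedLift_eq_one_eq_zero (hχ.ne hij) _ _

variable {n : ℕ} [NeZero n] {ι ν : Type*} {χ : ι → A →* F} {ψ : ν → A →* F} {τ : ν → F}

theorem twistedLift_dihedralRep_r_one_add_r_neg_one (ψ : A →* F) {τ : F}
    (hτ : rotationMatrix τ ^ n = 1) :
    twistedLift ψ (dihedralRep hτ) (inrAlgHom F A _ (of F _ (.r 1) + of F _ (.r (-1)))) =
      algebraMap F _ τ := by
  rw [twistedLift_inrAlgHom, map_add, lift_of, lift_of, dihedralRep_r_one_add_r_neg_one]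

theorem pi_twistedLift_dihedralRep_surjective [Finite ν] (hτ : ∀ j, rotationMatrix (τ j) ^ n = 1)
    (hdisc : ∀ j, τ j ^ 2 ≠ 4) (hψτ : Function.Injective fun j ↦ (ψ j, τ j)) :
    Function.Surjective (AlgHom.pi fun j ↦ twistedLift (ψ j) (dihedralRep (hτ j))) := by
  refine algHom_pi_surjective
    (fun j ↦ twistedLift_surjective _ (lift_dihedralRep_surjective (hdisc j) (hτ j)))
    fun i j hij ↦ ?_
  by_cases hψ : ψ i = ψ j
  · have hne : τ i ≠ τ j := fun h ↦ hψτ.ne hij (Prod.ext hψ h)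
    exact exists_map_eq_one_map_eq_zero hne
      (twistedLift_dihedralRep_r_one_add_r_neg_one (ψ i) (hτ i))
      (twistedLift_dihedralRep_r_one_add_r_neg_one (ψ j) (hτ j))
  · exact exists_twistedLift_eq_one_eq_zero hψ _ _

theorem twistedLift_dihedralRep_inrAlgHom_eq_zero (ψ : A →* F) {τ : F} (hdisc : τ ^ 2 ≠ 4)
    (hτ : rotationMatrix τ ^ n = 1) {x : F[DihedralGroup n]} (hx : of F _ (.r 1) * x = x) :
    twistedLift ψ (dihedralRep hτ) (inrAlgHom F A _ x) = 0 := by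
  have htwo : 2 - τ ≠ 0 := fun h ↦ hdisc (by linear_combination -(τ + 2) * h)
  rw [twistedLift_inrAlgHom]
  refine lift_eq_zero_of_of_mul_eq_self ?_ hx
  rw [dihedralRep_r_one]
  exact isUnit_rotationMatrix_sub_one htwo.isUnit

/-- The product of the one-dimensional representations `χ i ⊗ 1` and the two-dimensional ones
`ψ j ⊗ dihedralRep` of `A × DihedralGroup n`, as a map out of the group algebra. -/
noncomputable def prodDihedralAlgHom (χ : ι → A →* F) (ψ : ν → A →* F)
    (hτ : ∀ j, rotationMatrix (τ j) ^ n = 1) :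
    F[A × DihedralGroup n] →ₐ[F] (ι → F) × (ν → Matrix (Fin 2) (Fin 2) F) :=
  (AlgHom.pi fun i ↦ twistedLift (χ i) 1).prod
    (AlgHom.pi fun j ↦ twistedLift (ψ j) (dihedralRep (hτ j)))

theorem prodDihedralAlgHom_surjective [Finite ι] [Finite ν] (hn : (n : F) ≠ 0)
    (hχ : Function.Injective χ) (hτ : ∀ j, rotationMatrix (τ j) ^ n = 1)
    (hdisc : ∀ j, τ j ^ 2 ≠ 4) (hψτ : Function.Injective fun j ↦ (ψ j, τ j)) :
    Function.Surjective (prodDihedralAlgHom χ ψ hτ) := by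
  refine algHom_prod_surjective (pi_twistedLift_one_surjective hχ)
    (pi_twistedLift_dihedralRep_surjective hτ hdisc hψτ)
    ⟨(n : F)⁻¹ • inrAlgHom F A _ (rotationSum F n), funext fun i ↦ ?_, funext fun j ↦ ?_⟩
  · rw [AlgHom.pi_apply, map_smul, twistedLift_inrAlgHom, lift_one_rotationSum, smul_eq_mul,
      inv_mul_cancel₀ hn, Pi.one_apply]
  · rw [AlgHom.pi_apply, map_smul, twistedLift_dihedralRep_inrAlgHom_eq_zero (ψ j) (hdisc j) (hτ j)
      of_r_one_mul_rotationSum, smul_zero, Pi.zero_apply]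

theorem prodDihedralAlgHom_groupSum (hcard : (Fintype.card (DihedralGroup n) : F) = 0)
    (hτ : ∀ j, rotationMatrix (τ j) ^ n = 1) (hdisc : ∀ j, τ j ^ 2 ≠ 4) :
    prodDihedralAlgHom χ ψ hτ (inrAlgHom F A _ (groupSum F (DihedralGroup n))) = 0 := by
  refine Prod.ext (funext fun i ↦ ?_) (funext fun j ↦ ?_)
  · change twistedLift (χ i) 1 _ = 0
    rw [twistedLift_inrAlgHom, groupSum, map_sum, ← hcard]
    simp
  · exact twistedLift_dihedralRep_inrAlgHom_eq_zero (ψ j) (hdisc j) (hτ j) (of_mul_groupSum _)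

theorem finrank_prod_pi_matrix (F ι ν m : Type*) [Field F] [Fintype ι] [Fintype ν] [Fintype m] :
    Module.finrank F ((ι → F) × (ν → Matrix m m F)) =
      Fintype.card ι + Fintype.card ν * Fintype.card m ^ 2 := by
  simp [Module.finrank_pi_fintype, Module.finrank_matrix, sq]

theorem surjective_and_ker_prodDihedralAlgHom [CharP F 2] [Fintype A] [Fintype ι] [Fintype ν]
    (hn : Odd n) (hχ : Function.Injective χ) (hτ : ∀ j, rotationMatrix (τ j) ^ n = 1)
    (hψτ : Function.Injective fun j ↦ (ψ j, τ j)) (hι : Fintype.card ι = Fintype.card A)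
    (hν : 2 * Fintype.card ν + Fintype.card A = Fintype.card A * n) :
    Function.Surjective (prodDihedralAlgHom χ ψ hτ) ∧
      RingHom.ker (prodDihedralAlgHom χ ψ hτ).toRingHom =
        Ideal.jacobson (⊥ : Ideal F[A × DihedralGroup n]) := by
  have hn₀ : (n : F) ≠ 0 := by
    rw [Ne, CharP.cast_eq_zero_iff F 2]
    exact hn.not_two_dvd_nat
  have hcard : (Fintype.card (DihedralGroup n) : F) = 0 := by
    rw [CharP.cast_eq_zero_iff F 2, DihedralGroup.card]
    exact dvd_mul_right 2 n
  have hdisc (j : ν) : τ j ^ 2 ≠ 4 := sq_ne_four_of_rotationMatrix_pow_eq_one hn (hτ j)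
  have hsurj := prodDihedralAlgHom_surjective hn₀ hχ hτ hdisc hψτ
  refine ⟨hsurj, ker_eq_jacobson_bot_of_finrank hsurj hcard
    (prodDihedralAlgHom_groupSum hcard hτ hdisc) ?_⟩
  rw [finrank_prod_pi_matrix, hι, Fintype.card_fin, DihedralGroup.card]
  linear_combination 2 * hν

end Decomposition

section CyclicGroup

theorem exists_isPrimitiveRoot_of_dvd_card_sub_one {F : Type*} [Field F] [Fintype F] {n : ℕ}
    (hn : n ∣ Fintype.card F - 1) : ∃ ζ : F, IsPrimitiveRoot ζ n := by
  classical
  obtain ⟨m, hm⟩ := hn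
  obtain ⟨u, hu⟩ := IsCyclic.exists_ofOrder_eq_natCard (α := Fˣ)
  rw [Nat.card_eq_fintype_card, Fintype.card_units] at hu
  have hpos : 0 < Fintype.card F - 1 := Nat.sub_pos_of_lt Fintype.one_lt_card
  have hprim : IsPrimitiveRoot u (Fintype.card F - 1) := hu ▸ IsPrimitiveRoot.orderOf u
  exact ⟨_, (IsPrimitiveRoot.coe_units_iff.2 hprim).pow hpos (hm.trans (mul_comm n m))⟩

variable {M : Type*} [CommMonoid M] {n : ℕ} [NeZero n] {ω : M}

/-- The character `g ↦ ω ^ i` of the cyclic group of order `n` with generator `g = ofAdd 1`. -/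
def cyclicChar (hω : ω ^ n = 1) (i : Fin n) : Multiplicative (ZMod n) →* M :=
  (AddChar.zmodChar n hω).toMonoidHom ^ (i : ℕ)

theorem cyclicChar_ofAdd_one (hω : ω ^ n = 1) (i : Fin n) :
    cyclicChar hω i (.ofAdd 1) = ω ^ (i : ℕ) := by
  have hone : AddChar.zmodChar n hω 1 = ω := by
    simpa using AddChar.zmodChar_apply' hω 1
  exact congrArg (· ^ (i : ℕ)) hone

theorem cyclicChar_injective (hω : IsPrimitiveRoot ω n) :
    Function.Injective (cyclicChar hω.pow_eq_one) := by
  intro i j hij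
  have hpow : ω ^ (i : ℕ) = ω ^ (j : ℕ) := by
    rw [← cyclicChar_ofAdd_one hω.pow_eq_one, hij, cyclicChar_ofAdd_one]
  exact Fin.ext (hω.pow_inj i.isLt j.isLt hpow)

theorem pow_succ_injective_of_isPrimitiveRoot {n : ℕ} (hω : IsPrimitiveRoot ω (n + 1)) :
    Function.Injective fun i : Fin n ↦ ω ^ (i + 1 : ℕ) := fun i j hij ↦
  Fin.ext (Nat.succ_injective
    (hω.pow_inj (Nat.succ_lt_succ i.isLt) (Nat.succ_lt_succ j.isLt) hij))

end CyclicGroup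

section CubeRoot

variable {R : Type*} [CommRing R] [IsDomain R] [CharP R 2] {ω : R}

theorem sq_add_self_eq_one_of_isPrimitiveRoot_three (hω : IsPrimitiveRoot ω 3) : ω ^ 2 + ω = 1 := by
  have hsum := hω.geom_sum_eq_zero (by norm_num)
  simp only [Finset.sum_range_succ, Finset.sum_range_zero] at hsum
  linear_combination hsum - CharTwo.two_eq_zero (R := R)

theorem rotationMatrix_pow_five_of_isPrimitiveRoot_three (hω : IsPrimitiveRoot ω 3) (i : Fin 2) :
    rotationMatrix (ω ^ (i + 1 : ℕ)) ^ 5 = 1 := by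
  have hcop : Nat.Coprime (i + 1) 3 := by fin_cases i <;> norm_num
  have hroot : IsPrimitiveRoot (ω ^ (i + 1 : ℕ)) 3 := hω.pow_of_coprime _ hcop
  exact rotationMatrix_pow_five (sq_add_self_eq_one_of_isPrimitiveRoot_three hroot)

end CubeRoot

theorem stmt_5_general {F : Type*} [Field F] [CharP F 2] {ω : F} (hω : IsPrimitiveRoot ω 3) :
    ∃ φ : F[Multiplicative (ZMod 3) × DihedralGroup 5] →ₐ[F]
        ((Fin 3 → F) × (Fin 6 → Matrix (Fin 2) (Fin 2) F)),
      Function.Surjective φ ∧ RingHom.ker φ.toRingHom =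
        Ideal.jacobson (⊥ : Ideal F[Multiplicative (ZMod 3) × DihedralGroup 5]) := by
  let χ := cyclicChar hω.pow_eq_one
  let τ (i : Fin 2) : F := ω ^ (i + 1 : ℕ)
  let e : Fin 6 ≃ Fin 3 × Fin 2 := (finProdFinEquiv (m := 3) (n := 2)).symm
  have hχ : Function.Injective χ := cyclicChar_injective hω
  have hτ (j : Fin 6) : rotationMatrix (τ (e j).2) ^ 5 = 1 :=
    rotationMatrix_pow_five_of_isPrimitiveRoot_three hω (e j).2
  have hχτ : Function.Injective fun j ↦ (χ (e j).1, τ (e j).2) :=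
    (hχ.prodMap (pow_succ_injective_of_isPrimitiveRoot hω)).comp e.injective
  exact ⟨prodDihedralAlgHom χ (fun j ↦ χ (e j).1) hτ,
    surjective_and_ker_prodDihedralAlgHom (by decide) hχ hτ hχτ (by simp) (by simp)⟩

/-- For `F` a finite field of characteristic 2 with `q ≡ 1, 4 (mod 15)` and
`G = C₃ × D₁₀`, we have `FG/J(FG) ≅ F³ ⊕ M₂(F)⁶` as `F`-algebras, stated as the
existence of a surjective `F`-algebra map onto `F³ × M₂(F)⁶` with kernel `J(FG)`. -/
theorem stmt_5 (F : Type) [Field F] [Fintype F] (hchar : CharP F 2)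
    (hq : Fintype.card F % 15 = 1 ∨ Fintype.card F % 15 = 4) :
    let G := Multiplicative (ZMod 3) × DihedralGroup 5
    ∃ φ : MonoidAlgebra F G →ₐ[F]
        ((Fin 3 → F) × (Fin 6 → Matrix (Fin 2) (Fin 2) F)),
      Function.Surjective φ ∧
      RingHom.ker φ.toRingHom = Ideal.jacobson (⊥ : Ideal (MonoidAlgebra F G)) := by
  obtain ⟨ω, hω⟩ : ∃ ω : F, IsPrimitiveRoot ω 3 :=
    exists_isPrimitiveRoot_of_dvd_card_sub_one (by lia)
  exact stmt_5_general hω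
end
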